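/- arXiv:0807.4334 — 5 statements merged into one kernel-verified Lean document; each statement's English description precedes it below -/
import Mathlib

section
/- Let n, k ≥ 1 be integers, let n_1,…,n_k be positive integers with n < n_1 + … + n_k, and let a_{ij} (1 ≤ i ≤ n, 1 ≤ j ≤ k) be integers. If ∏_{i=1}^{n} (1 + Σ_{j=1}^{k} a_{ij} x̄_j) = 1 in the ring ℤ[x_1,…,x_k]/(x_1^{n_1+1},…,x_k^{n_k+1}), then there exists an index j ∈ {1,…,k} such that a_{ij} = 0 for every i = 1,…,n. -/
open MvPolynomial

/-- The ideal `(x_1^{n_1+1}, …, x_k^{n_k+1})` of `ℤ[x_1,…,x_k]`. -/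
noncomputable def truncIdeal (k : ℕ) (N : Fin k → ℕ) : Ideal (MvPolynomial (Fin k) ℤ) :=
  Ideal.span (Set.range fun j => X j ^ (N j + 1))

lemma prod_expand {A : Type*} [CommRing A] (x y : A) (hx : x * x = 0) (hy : y * y = 0)
    {ι : Type*} (s : Finset ι) (a b : ι → A) :
    ∏ i ∈ s, (1 + (a i * x + b i * y)) =
      1 + (∑ i ∈ s, a i) * x + (∑ i ∈ s, b i) * y +
        ((∑ i ∈ s, a i) * (∑ i ∈ s, b i) - ∑ i ∈ s, a i * b i) * (x * y) := by
  classical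
  induction s using Finset.induction_on with
  | empty => simp
  | insert i s hi ih =>
    rw [Finset.prod_insert hi, Finset.sum_insert hi, Finset.sum_insert hi,
      Finset.sum_insert hi, ih]
    generalize (∑ i ∈ s, a i) = P
    generalize (∑ i ∈ s, b i) = Q
    generalize (∑ i ∈ s, a i * b i) = R
    linear_combination (a i * P + a i * (P * Q - R) * y) * hx +
      (b i * Q + b i * (P * Q - R) * x) * hy

lemma key (n k : ℕ) (N : Fin k → ℕ) (hN : ∀ j, 0 < N j) (a : Fin n → Fin k → ℤ)
    (h : ∏ i : Fin n,
        Ideal.Quotient.mk (truncIdeal k N) (1 + ∑ j, C (a i j) * X j) = 1)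
    (p q : Fin k) (hpq : p ≠ q ∨ 2 ≤ N p) : ∑ i, a i p * a i q = 0 := by
  classical
  let x : DualNumber (DualNumber ℤ) := TrivSqZeroExt.inl DualNumber.eps
  let y : DualNumber (DualNumber ℤ) := DualNumber.eps
  have hx : x * x = 0 := by
    simp only [x]
    rw [TrivSqZeroExt.inl_mul_inl, DualNumber.eps_mul_eps, TrivSqZeroExt.inl_zero]
  have hy : y * y = 0 := DualNumber.eps_mul_eps
  let g : Fin k → DualNumber (DualNumber ℤ) :=
    fun j => (if j = p then x else 0) + (if j = q then y else 0)
  let φ : MvPolynomial (Fin k) ℤ →+* DualNumber (DualNumber ℤ) :=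
    eval₂Hom (Int.castRingHom _) g
  have hφ : ∀ c ∈ truncIdeal k N, φ c = 0 := by
    have : truncIdeal k N ≤ RingHom.ker φ := by
      rw [truncIdeal, Ideal.span_le]
      rintro _ ⟨j, rfl⟩
      simp only [SetLike.mem_coe, RingHom.mem_ker, map_pow, φ, eval₂Hom_X']
      have h2 : ∀ m, 0 < m → ∀ z : DualNumber (DualNumber ℤ), z * z = 0 → z ^ (m + 1) = 0 := by
        intro m hm z hz
        exact pow_eq_zero_of_le (by omega : 2 ≤ m + 1) (by rw [sq, hz])
      by_cases h1 : j = p <;> by_cases h3 : j = q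
      · have hNj : 2 ≤ N j := by
          rcases hpq with h | h
          · exact absurd (h1.symm.trans h3) h
          · rwa [h1]
        refine pow_eq_zero_of_le (by omega : 3 ≤ N j + 1) ?_
        simp only [g, if_pos h1, if_pos h3]
        linear_combination (x + 3 * y) * hx + (3 * x + y) * hy
      · exact h2 _ (hN j) _ (by simp only [g, if_pos h1, if_neg h3, add_zero, hx])
      · exact h2 _ (hN j) _ (by simp only [g, if_neg h1, if_pos h3, zero_add, hy])
      · exact h2 _ (hN j) _ (by simp [g, h1, h3])
    exact fun c hc => this hc
  have h1 := congrArg (Ideal.Quotient.lift (truncIdeal k N) φ hφ) h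
  rw [map_prod, map_one] at h1
  have h2 : ∀ i, φ (1 + ∑ j, C (a i j) * X j) = 1 + ((a i p : DualNumber (DualNumber ℤ)) * x
      + (a i q : DualNumber (DualNumber ℤ)) * y) := by
    intro i
    simp only [map_add, map_one, map_sum, map_mul, φ, eval₂Hom_X', eval₂Hom_C]
    simp [g, mul_add, Finset.sum_add_distrib]
  simp only [Ideal.Quotient.lift_mk, h2] at h1
  rw [prod_expand x y hx hy] at h1
  have e : ∀ P Q R : ℤ, (1 + (P : DualNumber (DualNumber ℤ)) * x + Q * y + R * (x * y) = 1) →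
      P = 0 ∧ R = 0 := by
    intro P Q R h
    have f1 := congrArg (fun z => z.fst.snd) h
    have f2 := congrArg (fun z => z.snd.snd) h
    simp [x, y] at f1 f2
    exact ⟨f1, f2⟩
  have := e (∑ i, a i p) (∑ i, a i q) ((∑ i, a i p) * (∑ i, a i q) - ∑ i, a i p * a i q)
    (by push_cast; exact h1)
  obtain ⟨u, v⟩ := this
  rw [u] at v
  linarith

/-- algebraic core of Theorem 5.1: if `n < n_1 + ⋯ + n_k` and
`∏_{i=1}^{n} (1 + ∑_j a_{ij} x̄_j) = 1` in `ℤ[x_1,…,x_k]/(x_j^{n_j+1})`, then some column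
of exponents `(a_{1j},…,a_{nj})` vanishes. -/
theorem stmt6 (n k : ℕ) (hn : 0 < n) (hk : 0 < k) (N : Fin k → ℕ) (hN : ∀ j, 0 < N j)
    (hlt : n < ∑ j, N j) (a : Fin n → Fin k → ℤ)
    (h : ∏ i : Fin n,
        Ideal.Quotient.mk (truncIdeal k N) (1 + ∑ j, C (a i j) * X j) = 1) :
    ∃ j, ∀ i, a i j = 0 := by
  by_cases h2 : ∃ j, 2 ≤ N j
  · obtain ⟨j, hj⟩ := h2
    have := key n k N hN a h j j (Or.inr hj)
    rw [Finset.sum_eq_zero_iff_of_nonneg (fun i _ => mul_self_nonneg _)] at this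
    exact ⟨j, fun i => mul_self_eq_zero.mp (this i (Finset.mem_univ i))⟩
  · push Not at h2
    have hN1 : ∀ j, N j = 1 := fun j => by have := h2 j; have := hN j; omega
    have hkn : n < k := by simpa [hN1] using hlt
    by_contra! hne
    let v : Fin k → EuclideanSpace ℝ (Fin n) := fun j => WithLp.toLp 2 fun i => (a i j : ℝ)
    have hli : LinearIndependent ℝ v := by
      apply linearIndependent_of_ne_zero_of_inner_eq_zero
      · intro j hj
        obtain ⟨i, hi⟩ := hne j
        have : v j i = 0 := by rw [hj]; rfl
        exact hi (by simpa [v] using this)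
      · intro p q hpq
        have := key n k N hN a h p q (Or.inl hpq)
        simp only [v, PiLp.inner_apply, RCLike.inner_apply, conj_trivial]
        have h3 : ((∑ i, a i p * a i q : ℤ) : ℝ) = 0 := by rw [this]; simp
        push_cast at h3
        rw [← h3]
        exact Finset.sum_congr rfl fun i _ => mul_comm _ _
    have := hli.fintype_card_le_finrank
    simp at this
    omega
end

section
/- Let n, k ≥ 1 be integers, let n_1,…,n_k be positive integers, and let a_{ij} (1 ≤ i ≤ n, 1 ≤ j ≤ k) be integers such that ∏_{i=1}^{n} (1 + Σ_{j=1}^{k} a_{ij} x̄_j) = 1 in the ring ℤ[x_1,…,x_k]/(x_1^{n_1+1},…,x_k^{n_k+1}). If j is an index with n_j ≥ 2, then a_{ij} = 0 for every i = 1,…,n. -/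
open MvPolynomial

lemma prod_expand_s7 {ι : Type*} (s : Finset ι) (b : ι → ℤ) :
    ∃ (e : ℤ) (q : Polynomial ℤ), (∑ i ∈ s, b i) ^ 2 - ∑ i ∈ s, b i ^ 2 = 2 * e ∧
      ∏ i ∈ s, (1 + Polynomial.C (b i) * Polynomial.X) =
        1 + Polynomial.C (∑ i ∈ s, b i) * Polynomial.X + Polynomial.C e * Polynomial.X ^ 2
          + Polynomial.X ^ 3 * q := by
  classical
  induction s using Finset.induction_on with
  | empty => exact ⟨0, 0, by simp, by simp⟩
  | insert i s hi ih =>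
    obtain ⟨e, q, h1, h2⟩ := ih
    refine ⟨e + b i * ∑ i ∈ s, b i,
      q + Polynomial.C (b i) * (Polynomial.C e + Polynomial.X * q), ?_, ?_⟩
    · rw [Finset.sum_insert hi, Finset.sum_insert hi]
      linear_combination h1
    · rw [Finset.prod_insert hi, Finset.sum_insert hi, h2]
      simp only [Polynomial.C_add, Polynomial.C_mul]
      ring

theorem stmt7 (n k : ℕ) (hn : 0 < n) (hk : 0 < k) (N : Fin k → ℕ) (hN : ∀ j, 0 < N j)
    (a : Fin n → Fin k → ℤ)
    (h : ∏ i : Fin n,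
        Ideal.Quotient.mk (truncIdeal k N) (1 + ∑ j, C (a i j) * X j) = 1)
    (j : Fin k) (hj : 2 ≤ N j) :
    ∀ i, a i j = 0 := by
  classical
  let φ : MvPolynomial (Fin k) ℤ →ₐ[ℤ] Polynomial ℤ :=
    aeval (fun i => if i = j then Polynomial.X else 0)
  have hle : truncIdeal k N ≤
      (Ideal.span {(Polynomial.X : Polynomial ℤ) ^ 3}).comap φ.toRingHom := by
    unfold truncIdeal
    rw [Ideal.span_le]
    rintro _ ⟨i, rfl⟩
    change φ (X i ^ (N i + 1)) ∈ Ideal.span {(Polynomial.X : Polynomial ℤ) ^ 3}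
    rw [Ideal.mem_span_singleton, map_pow, aeval_X]
    split_ifs with hij
    · subst hij
      exact pow_dvd_pow _ (by omega)
    · simp
  rw [← map_prod, ← map_one (Ideal.Quotient.mk (truncIdeal k N)), Ideal.Quotient.eq] at h
  have h' : φ ((∏ i : Fin n, (1 + ∑ j, C (a i j) * X j)) - 1) ∈
      Ideal.span {(Polynomial.X : Polynomial ℤ) ^ 3} := hle h
  have hφ : φ (∏ i : Fin n, (1 + ∑ j, C (a i j) * X j)) =
      ∏ i : Fin n, (1 + Polynomial.C (a i j) * Polynomial.X) := by
    rw [map_prod]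
    refine Finset.prod_congr rfl fun i _ => ?_
    simp [φ]
  rw [map_sub, map_one, hφ, Ideal.mem_span_singleton] at h'
  obtain ⟨e, q, h1, h2⟩ := prod_expand_s7 Finset.univ (fun i => a i j)
  rw [h2, Polynomial.X_pow_dvd_iff] at h'
  have c1 := h' 1 (by norm_num)
  have c2 := h' 2 (by norm_num)
  simp [Polynomial.coeff_X_pow_mul', Polynomial.coeff_one] at c1
  rw [c1] at c2
  simp [Polynomial.coeff_X_pow_mul', Polynomial.coeff_one] at c2
  rw [c1, c2] at h1
  have h0 : ∑ i, a i j ^ 2 = 0 := by linarith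
  rw [Finset.sum_eq_zero_iff_of_nonneg (fun i _ => sq_nonneg _)] at h0
  intro i
  exact pow_eq_zero_iff (two_ne_zero) |>.mp (h0 i (Finset.mem_univ i))
end

section
/- Let a, a′ be integers. There exists a ring isomorphism φ : ℤ[x,y]/(x², y(y + a′x)) → ℤ[x,y]/(x², y(y + ax)) mapping the ℤ-span of {x̄, ȳ} onto the ℤ-span of {x̄, ȳ} if and only if a ≡ a′ (mod 2). -/
open MvPolynomial

/-- The ideal `(x², y(y + ax))` of `ℤ[x,y]` (with `x = X 0`, `y = X 1`), defining the
cohomology ring of the Hirzebruch surface `H_a`. -/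
noncomputable def hirzIdeal (a : ℤ) : Ideal (MvPolynomial (Fin 2) ℤ) :=
  Ideal.span {X 0 ^ 2, X 1 * (X 1 + C a * X 0)}

lemma hirz_x_sq (a : ℤ) : Ideal.Quotient.mk (hirzIdeal a) (X 0) ^ 2 = 0 := by
  rw [← map_pow]
  exact Ideal.Quotient.eq_zero_iff_mem.2 (Ideal.subset_span (by simp))

lemma hirz_y_mul (a : ℤ) : Ideal.Quotient.mk (hirzIdeal a) (X 1) *
    (Ideal.Quotient.mk (hirzIdeal a) (X 1) + (a : MvPolynomial (Fin 2) ℤ ⧸ hirzIdeal a) *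
      Ideal.Quotient.mk (hirzIdeal a) (X 0)) = 0 := by
  have h : Ideal.Quotient.mk (hirzIdeal a) (X 1 * (X 1 + C a * X 0)) = 0 :=
    Ideal.Quotient.eq_zero_iff_mem.2 (Ideal.subset_span (by simp))
  have hC : (C a : MvPolynomial (Fin 2) ℤ) = (a : MvPolynomial (Fin 2) ℤ) := by simp
  rw [hC] at h
  simpa only [map_mul, map_add, map_intCast] using h

lemma hirz_sq_even (a : ℤ) (ha : 2 ∣ a) (z : MvPolynomial (Fin 2) ℤ ⧸ hirzIdeal a)
    (hz : z ∈ Submodule.span ℤ {Ideal.Quotient.mk (hirzIdeal a) (X 0),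
           Ideal.Quotient.mk (hirzIdeal a) (X 1)}) : ∃ r, z ^ 2 = 2 * r := by
  obtain ⟨p, q, rfl⟩ := Submodule.mem_span_pair.1 hz
  obtain ⟨b, rfl⟩ := ha
  have hx := hirz_x_sq (2 * b)
  have hy := hirz_y_mul (2 * b)
  generalize Ideal.Quotient.mk (hirzIdeal (2 * b)) (X 0) = x at *
  generalize Ideal.Quotient.mk (hirzIdeal (2 * b)) (X 1) = y at *
  push_cast at hy
  refine ⟨p * q * x * y - q ^ 2 * b * x * y, ?_⟩
  simp only [zsmul_eq_mul]
  linear_combination (p : MvPolynomial (Fin 2) ℤ ⧸ hirzIdeal (2 * b)) ^ 2 * hx +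
    (q : MvPolynomial (Fin 2) ℤ ⧸ hirzIdeal (2 * b)) ^ 2 * hy

/-- exponent of `xy` -/
noncomputable def hirzExp11 : Fin 2 →₀ ℕ := Finsupp.single 0 1 + Finsupp.single 1 1

/-- exponent of `y ^ 2` -/
noncomputable def hirzExp02 : Fin 2 →₀ ℕ := Finsupp.single 1 2

lemma hirz_functional (a : ℤ) (p : MvPolynomial (Fin 2) ℤ) (hp : p ∈ hirzIdeal a) :
    coeff hirzExp11 p - a * coeff hirzExp02 p = 0 := by
  obtain ⟨u, v, rfl⟩ := Ideal.mem_span_pair.1 hp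
  have e1 : (X 0 ^ 2 : MvPolynomial (Fin 2) ℤ) = monomial (Finsupp.single 0 2) 1 := by
    rw [X_pow_eq_monomial]
  have e2 : (X 1 * (X 1 + C a * X 0) : MvPolynomial (Fin 2) ℤ) =
      monomial hirzExp02 1 + monomial hirzExp11 a := by
    have h1 : (monomial hirzExp02 1 : MvPolynomial (Fin 2) ℤ) = X 1 ^ 2 := by
      rw [X_pow_eq_monomial]; rfl
    have h2 : (monomial hirzExp11 a : MvPolynomial (Fin 2) ℤ) = C a * (X 0 * X 1) := by
      rw [X, X, monomial_mul, C_mul_monomial]; simp [hirzExp11]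
    rw [h1, h2]; ring
  have n1 : ¬ (Finsupp.single 0 2 ≤ hirzExp11) := fun h => by
    have := h 0; simp [hirzExp11] at this
  have n2 : ¬ (Finsupp.single 0 2 ≤ hirzExp02) := fun h => by
    have := h 0; simp [hirzExp02] at this
  have n3 : ¬ (hirzExp02 ≤ hirzExp11) := fun h => by
    have := h 1; simp [hirzExp02, hirzExp11] at this
  have n4 : ¬ (hirzExp11 ≤ hirzExp02) := fun h => by
    have := h 0; simp [hirzExp02, hirzExp11] at this
  rw [e1, e2, mul_add]
  simp only [coeff_add, coeff_mul_monomial', n1, n2, n3, n4, if_false, le_refl, if_true, tsub_self]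
  ring

lemma hirz_even_of_sq (a : ℤ) (r : MvPolynomial (Fin 2) ℤ ⧸ hirzIdeal a)
    (h : Ideal.Quotient.mk (hirzIdeal a) (X 1) ^ 2 = 2 * r) : 2 ∣ a := by
  obtain ⟨r, rfl⟩ := Ideal.Quotient.mk_surjective r
  have h' : X 1 ^ 2 - (r + r) ∈ hirzIdeal a := by
    rw [← Ideal.Quotient.eq_zero_iff_mem, map_sub, map_pow, h, map_add]; ring
  have hL := hirz_functional a _ h'
  have e : (X 1 ^ 2 : MvPolynomial (Fin 2) ℤ) = monomial hirzExp02 1 := by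
    rw [X_pow_eq_monomial]; rfl
  have ne : hirzExp02 ≠ hirzExp11 := fun h => by
    have := DFunLike.congr_fun h 0; simp [hirzExp02, hirzExp11] at this
  rw [e] at hL
  simp only [coeff_sub, coeff_add, coeff_monomial, ne, if_false, if_true] at hL
  exact ⟨a * coeff hirzExp02 r - coeff hirzExp11 r, by linarith⟩

lemma hirz_transfer (a a' : ℤ) (φ : (MvPolynomial (Fin 2) ℤ ⧸ hirzIdeal a') ≃+*
        (MvPolynomial (Fin 2) ℤ ⧸ hirzIdeal a))
    (z : MvPolynomial (Fin 2) ℤ ⧸ hirzIdeal a')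
    (hz : z ∈ Submodule.span ℤ {Ideal.Quotient.mk (hirzIdeal a') (X 0),
           Ideal.Quotient.mk (hirzIdeal a') (X 1)})
    (h : φ z = Ideal.Quotient.mk (hirzIdeal a) (X 1)) (ha : 2 ∣ a') : 2 ∣ a := by
  obtain ⟨r, hr⟩ := hirz_sq_even a' ha z hz
  refine hirz_even_of_sq a (φ r) ?_
  rw [← h, ← map_pow, hr, map_mul, map_ofNat]

/-- The shear `x ↦ x`, `y ↦ y + kx`. -/
noncomputable def hirzHom (a a' k : ℤ) (h : a = a' + 2 * k) :
    (MvPolynomial (Fin 2) ℤ ⧸ hirzIdeal a') →+* (MvPolynomial (Fin 2) ℤ ⧸ hirzIdeal a) :=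
  Ideal.Quotient.lift (hirzIdeal a')
    ((aeval ![Ideal.Quotient.mk (hirzIdeal a) (X 0), Ideal.Quotient.mk (hirzIdeal a) (X 1) +
      (k : MvPolynomial (Fin 2) ℤ ⧸ hirzIdeal a) * Ideal.Quotient.mk (hirzIdeal a) (X 0)] :
      MvPolynomial (Fin 2) ℤ →ₐ[ℤ] _) : MvPolynomial (Fin 2) ℤ →+* _) (by
    have hx := hirz_x_sq a
    have hy := hirz_y_mul a
    intro p hp
    rw [← RingHom.mem_ker]
    refine (Ideal.span_le.2 ?_) hp
    rintro q (rfl | rfl)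
    · simpa [RingHom.mem_ker] using hx
    · simp only [SetLike.mem_coe, RingHom.mem_ker, RingHom.coe_coe, map_mul, map_add, aeval_X,
        map_intCast, Matrix.cons_val_zero, Matrix.cons_val_one, eq_intCast]
      have hc : (a : MvPolynomial (Fin 2) ℤ ⧸ hirzIdeal a) = a' + 2 * k := by
        rw [show (a : MvPolynomial (Fin 2) ℤ ⧸ hirzIdeal a) =
          ((a' + 2 * k : ℤ) : MvPolynomial (Fin 2) ℤ ⧸ hirzIdeal a) from congrArg _ h]
        push_cast; rfl
      rw [hc] at hy
      linear_combination hy + ((k : MvPolynomial (Fin 2) ℤ ⧸ hirzIdeal a) ^ 2 + k * a') * hx)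

lemma hirzHom_x (a a' k : ℤ) (h : a = a' + 2 * k) :
    hirzHom a a' k h (Ideal.Quotient.mk (hirzIdeal a') (X 0)) =
      Ideal.Quotient.mk (hirzIdeal a) (X 0) := by
  simp [hirzHom]

lemma hirzHom_y (a a' k : ℤ) (h : a = a' + 2 * k) :
    hirzHom a a' k h (Ideal.Quotient.mk (hirzIdeal a') (X 1)) =
      Ideal.Quotient.mk (hirzIdeal a) (X 1) +
      (k : MvPolynomial (Fin 2) ℤ ⧸ hirzIdeal a) * Ideal.Quotient.mk (hirzIdeal a) (X 0) := by
  simp [hirzHom]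

lemma hirzHom_comp (a a' k l : ℤ) (h : a = a' + 2 * k) (h' : a' = a + 2 * l) :
    (hirzHom a a' k h).comp (hirzHom a' a l h') = RingHom.id _ := by
  have hl : l = -k := by omega
  apply Ideal.Quotient.ringHom_ext
  apply MvPolynomial.ringHom_ext
  · intro n; simp
  · intro i
    fin_cases i
    · simp [hirzHom_x]
    · simp [hirzHom_x, hirzHom_y, hl]
      ring

lemma hirzHom_span (a a' k : ℤ) (h : a = a' + 2 * k) (z : MvPolynomial (Fin 2) ℤ ⧸ hirzIdeal a')
    (hz : z ∈ Submodule.span ℤ {Ideal.Quotient.mk (hirzIdeal a') (X 0),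
           Ideal.Quotient.mk (hirzIdeal a') (X 1)}) :
    hirzHom a a' k h z ∈ Submodule.span ℤ {Ideal.Quotient.mk (hirzIdeal a) (X 0),
           Ideal.Quotient.mk (hirzIdeal a) (X 1)} := by
  obtain ⟨p, q, rfl⟩ := Submodule.mem_span_pair.1 hz
  refine Submodule.mem_span_pair.2 ⟨p + q * k, q, ?_⟩
  simp only [zsmul_eq_mul, map_add, map_mul, map_intCast, hirzHom_x, hirzHom_y]
  push_cast
  ring

/-- Case 2 of Theorem 6.1, `n₁ = n₂ = 1`: the cohomology rings of the
Hirzebruch surfaces `H_{a'}` and `H_a` are isomorphic as graded rings if and only if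
`a ≡ a' (mod 2)`. -/
theorem stmt12 (a a' : ℤ) :
    (∃ φ : (MvPolynomial (Fin 2) ℤ ⧸ hirzIdeal a') ≃+*
        (MvPolynomial (Fin 2) ℤ ⧸ hirzIdeal a),
      φ '' (Submodule.span ℤ
          {Ideal.Quotient.mk (hirzIdeal a') (X 0),
           Ideal.Quotient.mk (hirzIdeal a') (X 1)} :
            Set (MvPolynomial (Fin 2) ℤ ⧸ hirzIdeal a')) =
        (Submodule.span ℤ
          {Ideal.Quotient.mk (hirzIdeal a) (X 0),
           Ideal.Quotient.mk (hirzIdeal a) (X 1)} :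
            Set (MvPolynomial (Fin 2) ℤ ⧸ hirzIdeal a))) ↔
    a % 2 = a' % 2 := by
  constructor
  · rintro ⟨φ, hφ⟩
    have h1 : 2 ∣ a' → 2 ∣ a := by
      have hm : Ideal.Quotient.mk (hirzIdeal a) (X 1) ∈ (Submodule.span ℤ
          {Ideal.Quotient.mk (hirzIdeal a) (X 0),
           Ideal.Quotient.mk (hirzIdeal a) (X 1)} :
            Set (MvPolynomial (Fin 2) ℤ ⧸ hirzIdeal a)) := Submodule.subset_span (by simp)
      rw [← hφ] at hm
      obtain ⟨z, hz, hzy⟩ := hm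
      exact hirz_transfer a a' φ z hz hzy
    have h2 : 2 ∣ a → 2 ∣ a' := by
      refine hirz_transfer a' a φ.symm (φ (Ideal.Quotient.mk (hirzIdeal a') (X 1))) ?_ (by simp)
      rw [← SetLike.mem_coe, ← hφ]
      exact ⟨_, Submodule.subset_span (by simp), rfl⟩
    omega
  · intro h
    obtain ⟨k, hk⟩ : ∃ k, a = a' + 2 * k := ⟨(a - a') / 2, by omega⟩
    have hk' : a' = a + 2 * (-k) := by omega
    refine ⟨RingEquiv.ofRingHom (hirzHom a a' k hk) (hirzHom a' a (-k) hk')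
      (hirzHom_comp _ _ _ _ _ _) (hirzHom_comp _ _ _ _ _ _), ?_⟩
    apply Set.Subset.antisymm
    · rintro _ ⟨z, hz, rfl⟩
      exact hirzHom_span a a' k hk z hz
    · intro w hw
      exact ⟨hirzHom a' a (-k) hk' w, hirzHom_span _ _ _ _ _ hw,
        DFunLike.congr_fun (hirzHom_comp a a' k (-k) hk hk') w⟩
end

section
/- Let a, b, c be integers. If c(2b − ac) = 0, then (b ȳ_1 + c ȳ_2 + 2 ȳ_3)² = 0 in the ring ℤ[y_1,y_2,y_3]/(y_1², y_2(a y_1 + y_2), y_3(b y_1 + c y_2 + y_3)). -/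
open MvPolynomial

/-- The ideal `(y₁², y₂(a y₁ + y₂), y₃(b y₁ + c y₂ + y₃))` of `ℤ[y₁,y₂,y₃]` (with
`yᵢ = X (i-1)`), defining the integral cohomology ring of the 3-stage Bott manifold
with twisting data `(a, b, c)`. -/
noncomputable def bott3Ideal (a b c : ℤ) : Ideal (MvPolynomial (Fin 3) ℤ) :=
  Ideal.span {X 0 ^ 2, X 1 * (C a * X 0 + X 1),
    X 2 * (C b * X 0 + C c * X 1 + X 2)}

/-- implication (3) ⇒ (2) of Lemma 7.2: if `c(2b − ac) = 0`, then
`(b ȳ₁ + c ȳ₂ + 2 ȳ₃)² = 0` in the cohomology ring of the 3-stage Bott manifold. -/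
theorem stmt17 (a b c : ℤ) (h : c * (2 * b - a * c) = 0) :
    (Ideal.Quotient.mk (bott3Ideal a b c) (C b * X 0 + C c * X 1 + C 2 * X 2)) ^ 2
      = 0 := by
  have h1 : (X 0 ^ 2 : MvPolynomial (Fin 3) ℤ) ∈ bott3Ideal a b c :=
    Ideal.subset_span (by simp)
  have h2 : (X 1 * (C a * X 0 + X 1) : MvPolynomial (Fin 3) ℤ) ∈ bott3Ideal a b c :=
    Ideal.subset_span (by simp)
  have h3 : (X 2 * (C b * X 0 + C c * X 1 + X 2) : MvPolynomial (Fin 3) ℤ) ∈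
      bott3Ideal a b c :=
    Ideal.subset_span (by simp)
  have hC : (C c * (2 * C b - C a * C c) : MvPolynomial (Fin 3) ℤ) = 0 := by
    have := congrArg (C : ℤ → MvPolynomial (Fin 3) ℤ) h
    simpa only [map_mul, map_sub, map_zero, map_ofNat] using this
  have h4 : (C 2 : MvPolynomial (Fin 3) ℤ) = 2 := map_ofNat C 2
  rw [← map_pow, Ideal.Quotient.eq_zero_iff_mem]
  have key : (C b * X 0 + C c * X 1 + C 2 * X 2 : MvPolynomial (Fin 3) ℤ) ^ 2
      = C b ^ 2 * X 0 ^ 2 + C c ^ 2 * (X 1 * (C a * X 0 + X 1))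
        + 4 * (X 2 * (C b * X 0 + C c * X 1 + X 2)) := by
    rw [h4]
    linear_combination (X 0 * X 1) * hC
  rw [key]
  exact add_mem (add_mem (Ideal.mul_mem_left _ _ h1) (Ideal.mul_mem_left _ _ h2))
    (Ideal.mul_mem_left _ _ h3)
end

section
/- Let a, b, c be integers. In the ring ℤ[y_1,y_2,y_3]/(y_1², y_2(a y_1 + y_2), y_3(b y_1 + c y_2 + y_3)) one has the identity (1 + ȳ_3²)·(1 + (ȳ_3 + b ȳ_1 + c ȳ_2)²) = 1 + c(2b − ac)·ȳ_1 ȳ_2. -/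
open MvPolynomial

/-- Lemma 7.3: in the cohomology ring of the 3-stage Bott manifold one
has `(1 + ȳ₃²)(1 + (ȳ₃ + b ȳ₁ + c ȳ₂)²) = 1 + c(2b − ac) ȳ₁ ȳ₂`; i.e. the total
Pontrjagin class of `B₃` is `1 + c(2b − ac) y₁ y₂`. -/
theorem stmt18 (a b c : ℤ) :
    Ideal.Quotient.mk (bott3Ideal a b c)
        ((1 + X 2 ^ 2) * (1 + (X 2 + C b * X 0 + C c * X 1) ^ 2)) =
      Ideal.Quotient.mk (bott3Ideal a b c)
        (1 + C (c * (2 * b - a * c)) * (X 0 * X 1)) := by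
  rw [Ideal.Quotient.eq]
  have h1 : (X 0 ^ 2 : MvPolynomial (Fin 3) ℤ) ∈ bott3Ideal a b c :=
    Ideal.subset_span (by simp)
  have h2 : (X 1 * (C a * X 0 + X 1) : MvPolynomial (Fin 3) ℤ) ∈ bott3Ideal a b c :=
    Ideal.subset_span (by simp)
  have h3 : (X 2 * (C b * X 0 + C c * X 1 + X 2) : MvPolynomial (Fin 3) ℤ) ∈
      bott3Ideal a b c :=
    Ideal.subset_span (by simp)
  have h := Ideal.add_mem _ (Ideal.add_mem _ (Ideal.mul_mem_left _ (C b ^ 2) h1)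
    (Ideal.mul_mem_left _ (C c ^ 2) h2))
    (Ideal.mul_mem_left _ (2 + X 2 * (C b * X 0 + C c * X 1 + X 2)) h3)
  have hC : (C (c * (2 * b - a * c)) : MvPolynomial (Fin 3) ℤ) =
      C c * (2 * C b - C a * C c) := by
    simp only [map_mul, map_sub, map_ofNat]
  rw [hC]
  convert h using 1
  ring
end
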